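/- Let n ∈ ℕ with n ≥ 2, let k ∈ ℕ, and let F be a smooth symmetric 2-cotensor field on ℝ^n. Suppose that for every unit-speed great circle γ on the unit sphere S^{n−1} ⊂ ℝ^n one has ∫₀^π F(γ(t))(γ'(t), γ'(t))·(sin t)^k dt = 0. Then for every x ∈ ℝ^n with ‖x‖ = 1 and every V ∈ ℝ^n with ⟨x, V⟩ = 0, one has F(−x)(V, V) = (−1)^k·F(x)(V, V). -/

import Mathlib

open Real intervalIntegral
open scoped RealInnerProductSpace

lemma aux_deriv (f g : ℝ → ℝ) (hf : ∀ x, HasDerivAt f (g x) x) (hg : Continuous g) (k : ℕ)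
    (h : ∀ s, ∫ t in (0:ℝ)..π, f (s + t) * Real.sin t ^ k = 0) :
    ∀ s, ∫ t in (0:ℝ)..π, g (s + t) * Real.sin t ^ k = 0 := by
  intro s
  have hfc : Continuous f := continuous_iff_continuousAt.2 fun x => (hf x).continuousAt
  obtain ⟨C, hC⟩ := (isCompact_Icc (a := s - 1) (b := s + 1 + π)).exists_bound_of_continuousOn
    hg.continuousOn
  have key := intervalIntegral.hasDerivAt_integral_of_dominated_loc_of_deriv_le
    (μ := MeasureTheory.volume) (a := (0:ℝ)) (b := π) (x₀ := s) (s := Metric.ball s 1)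
    (F := fun s t => f (s + t) * Real.sin t ^ k)
    (F' := fun s t => g (s + t) * Real.sin t ^ k) (bound := fun _ => C)
    (Metric.ball_mem_nhds s one_pos)
    (Filter.Eventually.of_forall fun x =>
      (by fun_prop : Continuous fun t => f (x + t) * Real.sin t ^ k).aestronglyMeasurable)
    ((by fun_prop : Continuous fun t => f (s + t) * Real.sin t ^ k).intervalIntegrable _ _)
    ((by fun_prop : Continuous fun t => g (s + t) * Real.sin t ^ k).aestronglyMeasurable)
    (Filter.Eventually.of_forall fun t ht x hx => by
      rw [Set.uIoc_of_le Real.pi_pos.le] at ht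
      rw [Metric.mem_ball, Real.dist_eq, abs_lt] at hx
      have h1 := hC (x + t) ⟨by linarith [ht.1], by linarith [ht.2]⟩
      rw [norm_mul, norm_pow]
      have h2 : ‖Real.sin t‖ ^ k ≤ 1 := pow_le_one₀ (norm_nonneg _) (Real.abs_sin_le_one t)
      calc _ ≤ ‖g (x + t)‖ * 1 := by gcongr
        _ ≤ C := by simpa using h1)
    (by simp)
    (Filter.Eventually.of_forall fun t ht x hx =>
      ((hf (x + t)).comp_add_const x t).mul_const _)
  have h2 := key.2
  simp only [h] at h2
  exact h2.unique (hasDerivAt_const s (0:ℝ))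

lemma aux_main (f g e : ℝ → ℝ) (hf : ∀ x, HasDerivAt f (g x) x) (hg : ∀ x, HasDerivAt g (e x) x)
    (he : Continuous e) (k : ℕ)
    (h : ∀ s, ∫ t in (0:ℝ)..π, f (s + t) * Real.sin t ^ k = 0) :
    ∀ s, f (s + π) = (-1) ^ k * f s := by
  have hfc : Continuous f := continuous_iff_continuousAt.2 fun x => (hf x).continuousAt
  have hgc : Continuous g := continuous_iff_continuousAt.2 fun x => (hg x).continuousAt
  have hf' : ∀ s t, HasDerivAt (fun t => f (s + t)) (g (s + t)) t :=
    fun s t => (hf (s + t)).comp_const_add s t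
  have hg' : ∀ s t, HasDerivAt (fun t => g (s + t)) (e (s + t)) t :=
    fun s t => (hg (s + t)).comp_const_add s t
  induction k using Nat.twoStepInduction with
  | zero =>
    intro s
    have h1 := aux_deriv f g hf hgc 0 h s
    simp only [pow_zero, mul_one] at h1
    rw [integral_eq_sub_of_hasDerivAt (f := fun t => f (s + t)) (fun t _ => hf' s t)
      ((by fun_prop : Continuous fun t => g (s + t)).intervalIntegrable _ _)] at h1
    simp at h1 ⊢
    linarith
  | one =>
    intro s
    have h0 := h s
    have h1 := aux_deriv g e hg he 1 (aux_deriv f g hf hgc 1 h) s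
    have h2 := integral_eq_sub_of_hasDerivAt (a := 0) (b := π)
      (f := fun t => g (s + t) * Real.sin t - f (s + t) * Real.cos t)
      (f' := fun t => e (s + t) * Real.sin t ^ 1 + f (s + t) * Real.sin t ^ 1)
      (fun t _ => by
        refine HasDerivAt.congr_deriv (((hg' s t).mul (Real.hasDerivAt_sin t)).sub
          ((hf' s t).mul (Real.hasDerivAt_cos t))) ?_
        ring)
      ((by fun_prop : Continuous _).intervalIntegrable _ _)
    rw [integral_add ((by fun_prop : Continuous _).intervalIntegrable _ _)
      ((by fun_prop : Continuous _).intervalIntegrable _ _), h0, h1] at h2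
    simp at h2 ⊢
    linarith
  | more j ih _ =>
    intro s
    have : ∀ s, ∫ t in (0:ℝ)..π, f (s + t) * Real.sin t ^ j = 0 := by
      intro s
      have h0 := h s
      have h1 := aux_deriv g e hg he (j+2) (aux_deriv f g hf hgc (j+2) h) s
      have h2 := integral_eq_sub_of_hasDerivAt (a := 0) (b := π)
        (f := fun t => g (s + t) * Real.sin t ^ (j+2)
          - (j+2) * (f (s + t) * (Real.sin t ^ (j+1) * Real.cos t)))
        (f' := fun t => (e (s + t) * Real.sin t ^ (j+2)
          + (j+2)^2 * (f (s + t) * Real.sin t ^ (j+2)))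
          - (j+2) * (j+1) * (f (s + t) * Real.sin t ^ j))
        (fun t _ => by
          refine HasDerivAt.congr_deriv (((hg' s t).mul ((Real.hasDerivAt_sin t).pow (j+2))).sub
            (((hf' s t).mul (((Real.hasDerivAt_sin t).pow (j+1)).mul
              (Real.hasDerivAt_cos t))).const_mul ((j:ℝ)+2))) ?_
          have := Real.cos_sq' t
          simp only [Pi.pow_apply, Pi.mul_apply, Nat.add_sub_cancel, show j + 2 - 1 = j + 1 from rfl]
          push_cast
          linear_combination (-(j+2:ℝ)*(j+1)*f (s+t) * Real.sin t ^ j) * this)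
        ((by fun_prop : Continuous _).intervalIntegrable _ _)
      rw [integral_sub ((by fun_prop : Continuous _).intervalIntegrable _ _)
        ((by fun_prop : Continuous _).intervalIntegrable _ _),
        integral_add ((by fun_prop : Continuous _).intervalIntegrable _ _)
        ((by fun_prop : Continuous _).intervalIntegrable _ _), integral_const_mul,
        integral_const_mul, h0, h1] at h2
      have hj : ((j:ℝ)+2) * (j+1) ≠ 0 := by positivity
      simp only [Real.sin_pi, Real.sin_zero, ne_eq, Nat.add_eq_zero_iff, OfNat.ofNat_ne_zero,
        one_ne_zero, and_false, not_false_eq_true, zero_pow, mul_zero, zero_mul, sub_zero,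
        add_zero, zero_sub, neg_eq_zero] at h2
      exact (mul_eq_zero.1 h2).resolve_left hj
    rw [ih this s]
    ring

/-- Part (i) of Lemma 3.2: if a smooth symmetric 2-cotensor field `F` on `ℝⁿ`
satisfies `∫₀^π F(γ(t))(γ'(t), γ'(t)) (sin t)^k dt = 0` for every unit-speed great
circle `γ` on the unit sphere, then the restriction of `F` to the sphere has the
parity of `k`. -/
theorem parity_of_tensor_with_vanishing_weighted_xray
    (n : ℕ) (hn : 2 ≤ n) (k : ℕ)
    (F : EuclideanSpace ℝ (Fin n) →
      (EuclideanSpace ℝ (Fin n) →L[ℝ] EuclideanSpace ℝ (Fin n) →L[ℝ] ℝ))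
    (hF : ContDiff ℝ (⊤ : ℕ∞) F)
    (hsymm : ∀ x V W, F x V W = F x W V)
    (h : ∀ u v : EuclideanSpace ℝ (Fin n), ‖u‖ = 1 → ‖v‖ = 1 → ⟪u, v⟫ = 0 →
      ∫ t in (0:ℝ)..π,
        F (Real.cos t • u + Real.sin t • v)
          (-Real.sin t • u + Real.cos t • v) (-Real.sin t • u + Real.cos t • v)
          * Real.sin t ^ k = 0) :
    ∀ x V : EuclideanSpace ℝ (Fin n), ‖x‖ = 1 → ⟪x, V⟫ = 0 →
      F (-x) V V = (-1 : ℝ) ^ k * F x V V := by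
  have unit : ∀ x v : EuclideanSpace ℝ (Fin n), ‖x‖ = 1 → ‖v‖ = 1 → ⟪x, v⟫ = 0 →
      F (-x) v v = (-1 : ℝ) ^ k * F x v v := by
    intro x v hx hv hxv
    let f : ℝ → ℝ := fun t => F (Real.cos t • x + Real.sin t • v)
          (-Real.sin t • x + Real.cos t • v) (-Real.sin t • x + Real.cos t • v)
    have hf : ContDiff ℝ 2 f := by
      have hF2 : ContDiff ℝ 2 F := contDiff_infty.1 hF 2
      have hc : ContDiff ℝ 2 Real.cos := Real.contDiff_cos
      have hs : ContDiff ℝ 2 Real.sin := Real.contDiff_sin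
      have h1 : ContDiff ℝ 2 (fun t => Real.cos t • x + Real.sin t • v) := by fun_prop
      have h2 : ContDiff ℝ 2 (fun t => -Real.sin t • x + Real.cos t • v) := by fun_prop
      exact ((hF2.comp h1).clm_apply h2).clm_apply h2
    have hf1 : ContDiff ℝ 1 (deriv f) := by
      have : ContDiff ℝ (1 + 1) f := by simpa [one_add_one_eq_two] using hf
      exact (contDiff_succ_iff_deriv.1 this).2.2
    have hf0 : Continuous (deriv (deriv f)) := hf1.continuous_deriv le_rfl
    have main := aux_main f (deriv f) (deriv (deriv f))
      (fun y => (hf.differentiable (by norm_num) y).hasDerivAt)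
      (fun y => (hf1.differentiable (by norm_num) y).hasDerivAt) hf0 k (by
        intro s
        have hvx : ⟪v, x⟫ = 0 := by rw [real_inner_comm]; exact hxv
        have hxx : ⟪x, x⟫ = 1 := by rw [real_inner_self_eq_norm_sq, hx]; norm_num
        have hvv : ⟪v, v⟫ = 1 := by rw [real_inner_self_eq_norm_sq, hv]; norm_num
        have e := Real.sin_sq_add_cos_sq s
        have := h (Real.cos s • x + Real.sin s • v) (-Real.sin s • x + Real.cos s • v)
          (by
            rw [norm_eq_sqrt_real_inner, Real.sqrt_eq_one]
            simp only [inner_add_left, inner_add_right, real_inner_smul_left,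
              real_inner_smul_right, hvx, hxv, hxx, hvv]
            linarith)
          (by
            rw [norm_eq_sqrt_real_inner, Real.sqrt_eq_one]
            simp only [inner_add_left, inner_add_right, real_inner_smul_left,
              real_inner_smul_right, hvx, hxv, hxx, hvv]
            linarith)
          (by
            simp only [inner_add_left, inner_add_right, real_inner_smul_left,
              real_inner_smul_right, hvx, hxv, hxx, hvv]
            ring)
        rw [← this]
        congr 1
        ext t
        have e1 : Real.cos t • (Real.cos s • x + Real.sin s • v)
            + Real.sin t • (-Real.sin s • x + Real.cos s • v)
            = Real.cos (s + t) • x + Real.sin (s + t) • v := by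
          rw [Real.cos_add, Real.sin_add]; module
        have e2 : -Real.sin t • (Real.cos s • x + Real.sin s • v)
            + Real.cos t • (-Real.sin s • x + Real.cos s • v)
            = -Real.sin (s + t) • x + Real.cos (s + t) • v := by
          rw [Real.cos_add, Real.sin_add]; module
        rw [e1, e2]) 0
    simpa [f] using main
  intro x V hx hxV
  by_cases hV : V = 0
  · simp [hV]
  have hn0 : ‖V‖ ≠ 0 := norm_ne_zero_iff.2 hV
  have := unit x (‖V‖⁻¹ • V) hx (by rw [norm_smul, norm_inv, norm_norm, inv_mul_cancel₀ hn0])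
    (by rw [real_inner_smul_right, hxV, mul_zero])
  simp only [map_smul, smul_apply, smul_eq_mul] at this
  field_simp at this
  exact this
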